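/- Let G be a graph and S = {v₁,…,v_k} ⊆ V(G), and fix ℓ ≥ 3. Construct G' by adding new vertices v₁',…,v_k', for each i two internally disjoint paths vᵢvᵢ¹vᵢ' and vᵢvᵢ²vᵢ' of length 2 (via new vertices vᵢ¹, vᵢ²), and ℓ−2 new vertices a₁,…,a_{ℓ−2} each joined to all of v₁',…,v_k'. Let S' = {v₁',…,v_k'}. Then G contains two edge-disjoint Steiner trees connecting S if and only if G' contains ℓ pairwise edge-disjoint Steiner trees connecting S'. -/

import Mathlib

open SimpleGraph

def IsSteinerTree {V : Type*} (G : SimpleGraph V) (S : Set V) (T : G.Subgraph) : Prop :=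
  S ⊆ T.verts ∧ T.coe.IsTree

def EdgeDisjointFamily {V : Type*} (G : SimpleGraph V) (S : Set V) {ℓ : ℕ}
    (F : Fin ℓ → G.Subgraph) : Prop :=
  (∀ i, IsSteinerTree G S (F i)) ∧
    ∀ i j, i ≠ j → (F i).edgeSet ∩ (F j).edgeSet = ∅

/-- The graph `G'` obtained from `G` by adding, for each `i : Fin k`, new vertices
`vᵢ' = inr (inl (i,0))`, `vᵢ¹ = inr (inl (i,1))`, `vᵢ² = inr (inl (i,2))` with the two paths
`vᵢvᵢ¹vᵢ'` and `vᵢvᵢ²vᵢ'`, together with `ℓ - 2` vertices `aⱼ = inr (inr j)` each joined to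
all the `vᵢ'`. -/
def pathFanExt {V : Type*} (G : SimpleGraph V) (k ℓ : ℕ) (v : Fin k → V) :
    SimpleGraph (V ⊕ ((Fin k × Fin 3) ⊕ Fin (ℓ - 2))) :=
  SimpleGraph.fromRel (fun x y =>
    (∃ p q : V, x = Sum.inl p ∧ y = Sum.inl q ∧ G.Adj p q) ∨
    (∃ i : Fin k, x = Sum.inl (v i) ∧ y = Sum.inr (Sum.inl (i, 1))) ∨
    (∃ i : Fin k, x = Sum.inr (Sum.inl (i, 1)) ∧ y = Sum.inr (Sum.inl (i, 0))) ∨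
    (∃ i : Fin k, x = Sum.inl (v i) ∧ y = Sum.inr (Sum.inl (i, 2))) ∨
    (∃ i : Fin k, x = Sum.inr (Sum.inl (i, 2)) ∧ y = Sum.inr (Sum.inl (i, 0))) ∨
    (∃ (j : Fin (ℓ - 2)) (i : Fin k),
        x = Sum.inr (Sum.inr j) ∧ y = Sum.inr (Sum.inl (i, 0))))

/-!
At a terminal `vᵢ'` the `ℓ` incident edges have to be shared out among the `ℓ` trees, and each tree
needs one of them, so every tree has exactly one edge there. A tree using an edge at an apex `aⱼ` is
therefore a star at `aⱼ`: it can leave neither `aⱼ` nor the terminals joined to it. The two trees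
that use the two middle vertices next to some terminal thus avoid all apices, so they must pass
through every `vᵢ`, and contracting the paths between `vᵢ` and `vᵢ'` onto `vᵢ` keeps them connected.
Conversely, two trees of `G` are prolonged along the first and the second paths respectively, and
the stars at the apices are the other `ℓ - 2` trees. A single terminal has to be treated apart,
since trees of `G'` can then avoid `G` altogether.
-/

section Connectivity

variable {V W : Type*} {G : SimpleGraph V} {H : G.Subgraph}

theorem exists_adj_mem_notMem_of_connected (hH : H.Connected) (X : Set V) {x y : V}
    (hx : x ∈ H.verts) (hxX : x ∈ X) (hy : y ∈ H.verts) (hyX : y ∉ X) :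
    ∃ a ∈ X, ∃ b ∉ X, H.Adj a b := by
  obtain ⟨p⟩ := hH ⟨x, hx⟩ ⟨y, hy⟩
  obtain ⟨d, -, hfst, hsnd⟩ := p.exists_boundary_dart (Subtype.val ⁻¹' X) hxX hyX
  exact ⟨d.fst, hfst, d.snd, hsnd, d.adj⟩

theorem connected_of_surjective_of_eq_or_adj {G' : SimpleGraph W} (hG : G.Connected) {f : V → W}
    (hf : Function.Surjective f) (hadj : ∀ x y, G.Adj x y → f x = f y ∨ G'.Adj (f x) (f y)) :
    G'.Connected := by
  have hreach : ∀ {x y}, G.Walk x y → G'.Reachable (f x) (f y) := by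
    intro x y p
    induction p with
    | nil => exact .rfl
    | cons h _ ih =>
      rcases hadj _ _ h with heq | h'
      · rwa [heq]
      · exact h'.reachable.trans ih
  have := hG.nonempty.map f
  exact ⟨hf.forall₂.2 fun x y ↦ (hG.preconnected x y).elim hreach⟩

theorem connected_subgraphMap {G' : SimpleGraph W} (hH : H.Connected) (f : G →g G') :
    (H.map f).Connected := by
  let g : H.coe →g (H.map f).coe :=
    ⟨fun x ↦ ⟨f x, x, x.2, rfl⟩, fun {x y} h ↦ ⟨x, y, h, rfl, rfl⟩⟩
  refine ⟨hH.coe.map g ?_⟩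
  rintro ⟨_, x, hx, rfl⟩
  exact ⟨⟨x, hx⟩, rfl⟩

theorem connected_sup_iSup {ι : Sort*} {P : ι → G.Subgraph} (hH : H.Connected)
    (hP : ∀ i, (P i).Connected) (hmeet : ∀ i, (H ⊓ P i).verts.Nonempty) :
    (H ⊔ ⨆ i, P i).Connected := by
  obtain ⟨u, hu⟩ := hH.nonempty
  rw [Subgraph.connected_iff', connected_iff_exists_forall_reachable]
  refine ⟨⟨u, .inl hu⟩, ?_⟩
  rintro ⟨x, hx | hx⟩
  · exact (hH ⟨u, hu⟩ ⟨x, hx⟩).map (Subgraph.inclusion le_sup_left)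
  · obtain ⟨i, hi⟩ : ∃ i, x ∈ (P i).verts := by simpa using hx
    have hsup : (H ⊔ P i).Connected :=
      Subgraph.connected_sup hH.preconnected (hP i).preconnected (hmeet i)
    exact (hsup ⟨u, .inl hu⟩ ⟨x, .inr hi⟩).map
      (Subgraph.inclusion (sup_le_sup_left (le_iSup P i) H))

theorem exists_le_verts_eq_isTree (hH : H.Connected) :
    ∃ T ≤ H, T.verts = H.verts ∧ T.coe.IsTree := by
  obtain ⟨K, hKH, hK⟩ := hH.coe.exists_isTree_le
  have hle : K.spanningCoe ≤ H.spanningCoe := by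
    rw [← Subgraph.spanningCoe_coe]
    exact map_monotone _ hKH
  let T : G.Subgraph :=
    { verts := H.verts
      Adj := K.spanningCoe.Adj
      adj_sub := fun h ↦ H.adj_sub (hle h)
      edge_vert := fun h ↦ H.edge_vert (hle h)
      symm := K.spanningCoe.symm }
  have hT : T.coe = K := K.induce_spanningCoe
  exact ⟨T, ⟨subset_rfl, hle⟩, rfl, hT ▸ hK⟩

theorem disjoint_edgeSet_comap {G' : SimpleGraph W} {H K : G'.Subgraph}
    (h : Disjoint H.edgeSet K.edgeSet) (f : G →g G') :
    Disjoint (H.comap f).edgeSet (K.comap f).edgeSet := by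
  have hsub : ∀ L : G'.Subgraph, (L.comap f).edgeSet ⊆ Sym2.map f ⁻¹' L.edgeSet := by
    intro L e
    induction e with
    | _ x y => exact fun he ↦ he.2
  exact (h.preimage (Sym2.map f)).mono (hsub H) (hsub K)

end Connectivity

section SteinerTree

variable {V : Type*} {G : SimpleGraph V} {S : Set V} {n : ℕ}

theorem IsSteinerTree.connected {T : G.Subgraph} (hT : IsSteinerTree G S T) : T.Connected :=
  ⟨hT.2.connected⟩

theorem exists_edgeDisjointFamily {ι : Type*} [Fintype ι] (hι : Fintype.card ι = n)
    (H : ι → G.Subgraph) (hconn : ∀ t, (H t).Connected) (hS : ∀ t, S ⊆ (H t).verts)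
    (hdisj : Pairwise fun s t ↦ Disjoint (H s).edgeSet (H t).edgeSet) :
    ∃ F : Fin n → G.Subgraph, EdgeDisjointFamily G S F := by
  choose T hle hverts hT using fun t ↦ exists_le_verts_eq_isTree (hconn t)
  let e := (Fintype.equivFinOfCardEq hι).symm
  refine ⟨T ∘ e, fun i ↦ ⟨(hS _).trans (hverts _).ge, hT _⟩, fun i j hij ↦ ?_⟩
  exact ((hdisj (e.injective.ne hij)).mono (Subgraph.edgeSet_mono (hle _))
    (Subgraph.edgeSet_mono (hle _))).inter_eq

theorem exists_edgeDisjointFamily_of_subset_singleton {x : V} (hS : S ⊆ {x}) :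
    ∃ F : Fin n → G.Subgraph, EdgeDisjointFamily G S F := by
  refine exists_edgeDisjointFamily (Fintype.card_fin n) (fun _ ↦ G.singletonSubgraph x)
    (fun _ ↦ Subgraph.singletonSubgraph_connected) (fun _ ↦ hS) fun _ _ _ ↦ ?_
  simp only [edgeSet_singletonSubgraph, Set.disjoint_empty]

namespace EdgeDisjointFamily

variable {F : Fin n → G.Subgraph}

theorem disjoint_edgeSet (hF : EdgeDisjointFamily G S F) {s t : Fin n} (hst : s ≠ t) :
    Disjoint (F s).edgeSet (F t).edgeSet :=
  Set.disjoint_iff_inter_eq_empty.2 (hF.2 s t hst)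

theorem eq_of_adj (hF : EdgeDisjointFamily G S F) {s t : Fin n} {x y : V} (hs : (F s).Adj x y)
    (ht : (F t).Adj x y) : s = t := by
  by_contra hst
  exact (hF.disjoint_edgeSet hst).ne_of_mem (Subgraph.mem_edgeSet.2 hs) (Subgraph.mem_edgeSet.2 ht)
    rfl

theorem exists_equiv_neighborSet (hF : EdgeDisjointFamily G S F) {x : V}
    (hcard : (G.neighborSet x).encard ≤ n) (hx : ∀ t, ∃ w, (F t).Adj x w) :
    ∃ c : Fin n ≃ G.neighborSet x, ∀ t w, (F t).Adj x w ↔ w = c t := by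
  have hfin : (G.neighborSet x).Finite := Set.finite_of_encard_le_coe hcard
  have := hfin.to_subtype
  choose c hc using hx
  let c' : Fin n → G.neighborSet x := fun t ↦ ⟨c t, (hc t).adj_sub⟩
  have hinj : Function.Injective c' := fun s t hst ↦ by
    have hval : c s = c t := congrArg Subtype.val hst
    exact hF.eq_of_adj (hc s) (hval ▸ hc t)
  have hle : Nat.card (G.neighborSet x) ≤ Nat.card (Fin n) := by
    rw [Nat.card_fin, Nat.card_coe_set_eq]
    rwa [← hfin.cast_ncard_eq, Nat.cast_le] at hcard
  have hbij := hinj.bijective_of_nat_card_le hle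
  refine ⟨.ofBijective c' hbij, fun t w ↦ ⟨fun h ↦ ?_, ?_⟩⟩
  · obtain ⟨s, hs⟩ := hbij.surjective ⟨w, h.adj_sub⟩
    obtain rfl : c s = w := congrArg Subtype.val hs
    rw [hF.eq_of_adj h (hc s)]
    rfl
  · rintro rfl
    exact hc t

end EdgeDisjointFamily

end SteinerTree

namespace pathFanExt

section Vertices

variable {V A : Type*} {k : ℕ}

/-- The terminal `vᵢ'`. -/
abbrev terminal (i : Fin k) : V ⊕ ((Fin k × Fin 3) ⊕ A) := .inr (.inl (i, 0))

/-- The middle vertices `vᵢ¹ = mid i 0` and `vᵢ² = mid i 1` of the paths from `vᵢ` to `vᵢ'`. -/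
abbrev mid (i : Fin k) (s : Fin 2) : V ⊕ ((Fin k × Fin 3) ⊕ A) := .inr (.inl (i, s.succ))

/-- The vertex `aⱼ`, which is joined to all the terminals. -/
abbrev apex (j : A) : V ⊕ ((Fin k × Fin 3) ⊕ A) := .inr (.inr j)

@[elab_as_elim]
theorem vertex_cases {motive : V ⊕ ((Fin k × Fin 3) ⊕ A) → Prop} (inl : ∀ p, motive (.inl p))
    (terminal : ∀ i, motive (terminal i)) (mid : ∀ i s, motive (mid i s))
    (apex : ∀ j, motive (apex j)) (x) : motive x := by
  rcases x with p | ⟨i, a⟩ | j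
  · exact inl p
  · cases a using Fin.cases with
    | zero => exact terminal i
    | succ s => exact mid i s
  · exact apex j

end Vertices

variable {V : Type*} {G : SimpleGraph V} {k ℓ : ℕ} {v : Fin k → V}

theorem adj_inl_inl {p q : V} : (pathFanExt G k ℓ v).Adj (.inl p) (.inl q) ↔ G.Adj p q := by
  simpa [pathFanExt, G.adj_comm q p] using fun h ↦ G.ne_of_adj h

theorem adj_terminal_iff {i : Fin k} {w} :
    (pathFanExt G k ℓ v).Adj (terminal i) w ↔ (∃ s, w = mid i s) ∨ ∃ j, w = apex j := by
  cases w using vertex_cases with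
  | inl p => simp [pathFanExt]
  | terminal m => simp [pathFanExt]
  | mid m s => fin_cases s <;> simp [pathFanExt, eq_comm]
  | apex j => simp [pathFanExt]

theorem adj_mid_iff {i : Fin k} {s : Fin 2} {w} :
    (pathFanExt G k ℓ v).Adj (mid i s) w ↔ w = .inl (v i) ∨ w = terminal i := by
  cases w using vertex_cases with
  | inl p => fin_cases s <;> simp [pathFanExt]
  | terminal m => fin_cases s <;> simp [pathFanExt, eq_comm]
  | mid m t => fin_cases s <;> fin_cases t <;> simp [pathFanExt]
  | apex j => fin_cases s <;> simp [pathFanExt]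

theorem adj_apex_iff {j : Fin (ℓ - 2)} {w} :
    (pathFanExt G k ℓ v).Adj (apex j) w ↔ ∃ i, w = terminal i := by
  cases w using vertex_cases with
  | inl p => simp [pathFanExt]
  | terminal m => simp [pathFanExt]
  | mid m s => simp [pathFanExt]
  | apex j => simp [pathFanExt]

theorem adj_inl_mid (i : Fin k) (s : Fin 2) :
    (pathFanExt G k ℓ v).Adj (.inl (v i)) (mid i s) :=
  (adj_mid_iff.2 (.inl rfl)).symm

theorem adj_mid_terminal (i : Fin k) (s : Fin 2) :
    (pathFanExt G k ℓ v).Adj (mid i s) (terminal i) :=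
  adj_mid_iff.2 (.inr rfl)

theorem adj_apex_terminal (j : Fin (ℓ - 2)) (i : Fin k) :
    (pathFanExt G k ℓ v).Adj (apex j) (terminal i) :=
  adj_apex_iff.2 ⟨i, rfl⟩

theorem encard_neighborSet_terminal (hl : 2 ≤ ℓ) (i : Fin k) :
    ((pathFanExt G k ℓ v).neighborSet (terminal i)).encard = ℓ := by
  let nbr : Fin 2 ⊕ Fin (ℓ - 2) → V ⊕ ((Fin k × Fin 3) ⊕ Fin (ℓ - 2)) := Sum.elim (mid i) apex
  have hrange : (pathFanExt G k ℓ v).neighborSet (terminal i) = nbr '' Set.univ := by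
    ext w
    simp [nbr, adj_terminal_iff, eq_comm]
  have hinj : Function.Injective nbr := by
    rintro (s | j) (t | j') h <;> simp_all [nbr]
  rw [hrange, hinj.encard_image, Set.encard_univ, ENat.card_eq_coe_fintype_card, Fintype.card_sum,
    Fintype.card_fin, Fintype.card_fin, Nat.add_sub_of_le hl]

section OfSteinerTrees

variable (G k ℓ v) in
/-- The copy of `G` inside its extension. -/
def inlHom : G →g pathFanExt G k ℓ v := ⟨Sum.inl, adj_inl_inl.2⟩

variable (G ℓ v) in
/-- The path `vᵢ vᵢ¹ vᵢ'` for `s = 0` and `vᵢ vᵢ² vᵢ'` for `s = 1`. -/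
def terminalPath (i : Fin k) (s : Fin 2) : (pathFanExt G k ℓ v).Walk (.inl (v i)) (terminal i) :=
  .cons (adj_inl_mid i s) (.cons (adj_mid_terminal i s) .nil)

variable (ℓ v) in
/-- The prolongation of a subgraph of `G` to the terminals along the paths through the vertices
`mid i s`. -/
def prolongation (T : G.Subgraph) (s : Fin 2) : (pathFanExt G k ℓ v).Subgraph :=
  T.map (inlHom G k ℓ v) ⊔ ⨆ i, (terminalPath G ℓ v i s).toSubgraph

variable (G v) in
/-- The star with centre `aⱼ` whose leaves are the terminals. -/
def apexStar (j : Fin (ℓ - 2)) : (pathFanExt G k ℓ v).Subgraph :=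
  (pathFanExt G k ℓ v).singletonSubgraph (apex j) ⊔ ⨆ i, subgraphOfAdj _ (adj_apex_terminal j i)

theorem connected_prolongation {T : G.Subgraph} (hT : T.Connected) (hv : Set.range v ⊆ T.verts)
    (s : Fin 2) : (prolongation ℓ v T s).Connected :=
  connected_sup_iSup (connected_subgraphMap hT _)
    (fun i ↦ (terminalPath G ℓ v i s).toSubgraph_connected)
    fun i ↦ ⟨.inl (v i), ⟨v i, hv ⟨i, rfl⟩, rfl⟩, Walk.start_mem_verts_toSubgraph _⟩

theorem connected_apexStar (j : Fin (ℓ - 2)) : (apexStar G v j).Connected :=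
  connected_sup_iSup Subgraph.singletonSubgraph_connected
    (fun i ↦ Subgraph.subgraphOfAdj_connected (adj_apex_terminal j i))
    fun _ ↦ ⟨apex j, rfl, .inl rfl⟩

theorem terminal_mem_prolongation (T : G.Subgraph) (s : Fin 2) (i : Fin k) :
    terminal i ∈ (prolongation ℓ v T s).verts :=
  Subgraph.verts_mono (le_sup_of_le_right (le_iSup_iff.2 fun _ h ↦ h i))
    (terminalPath G ℓ v i s).end_mem_verts_toSubgraph

theorem terminal_mem_apexStar (j : Fin (ℓ - 2)) (i : Fin k) :
    terminal i ∈ (apexStar G v j).verts := by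
  simp [apexStar]

theorem edgeSet_prolongation (T : G.Subgraph) (s : Fin 2) :
    (prolongation ℓ v T s).edgeSet = Sym2.map .inl '' T.edgeSet ∪
      ⋃ i, {s(.inl (v i), mid i s), s(mid i s, terminal i)} := by
  rw [prolongation, Subgraph.edgeSet_sup, Subgraph.edgeSet_map, Subgraph.edgeSet_iSup]
  congr! with i
  ext e
  simp [terminalPath, or_comm]

theorem edgeSet_apexStar (j : Fin (ℓ - 2)) :
    (apexStar G v j).edgeSet = Set.range fun i : Fin k ↦ s(apex j, terminal i) := by
  rw [apexStar, Subgraph.edgeSet_sup, Subgraph.edgeSet_iSup]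
  ext e
  simp [eq_comm]

theorem notMem_edgeSet_prolongation_of_apex_mem {T : G.Subgraph} {s : Fin 2} {j : Fin (ℓ - 2)}
    {e} (he : apex j ∈ e) : e ∉ (prolongation ℓ v T s).edgeSet := by
  rw [edgeSet_prolongation]
  rintro (⟨e, -, rfl⟩ | hpath)
  · simp at he
  · obtain ⟨i, rfl | rfl⟩ := Set.mem_iUnion.1 hpath <;> simp at he

theorem disjoint_edgeSet_prolongation {T T' : G.Subgraph} (hT : Disjoint T.edgeSet T'.edgeSet)
    {s t : Fin 2} (hst : s ≠ t) :
    Disjoint (prolongation ℓ v T s).edgeSet (prolongation ℓ v T' t).edgeSet := by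
  have hinj : Function.Injective
      (Sym2.map Sum.inl : Sym2 V → Sym2 (V ⊕ ((Fin k × Fin 3) ⊕ Fin (ℓ - 2)))) :=
    Sym2.map.injective Sum.inl_injective
  rw [edgeSet_prolongation, edgeSet_prolongation, Set.disjoint_left]
  rintro _ (⟨e, he, rfl⟩ | hpath) (⟨e', he', heq⟩ | hpath')
  · exact hT.ne_of_mem he he' (hinj heq).symm
  · obtain ⟨i, h | h⟩ := Set.mem_iUnion.1 hpath'
    all_goals cases e; simp at h
  · obtain ⟨i, rfl | rfl⟩ := Set.mem_iUnion.1 hpath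
    all_goals cases e'; simp at heq
  · obtain ⟨i, rfl | rfl⟩ := Set.mem_iUnion.1 hpath
    all_goals obtain ⟨i', h | h⟩ := Set.mem_iUnion.1 hpath'
    all_goals simp [hst] at h

theorem disjoint_edgeSet_prolongation_apexStar (T : G.Subgraph) (s : Fin 2) (j : Fin (ℓ - 2)) :
    Disjoint (prolongation ℓ v T s).edgeSet (apexStar G v j).edgeSet := by
  rw [edgeSet_apexStar, Set.disjoint_right]
  rintro _ ⟨i, rfl⟩
  exact notMem_edgeSet_prolongation_of_apex_mem (Sym2.mem_mk_left _ _)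

theorem disjoint_edgeSet_apexStar {j j' : Fin (ℓ - 2)} (hj : j ≠ j') :
    Disjoint (apexStar G v j).edgeSet (apexStar G v j').edgeSet := by
  rw [edgeSet_apexStar, edgeSet_apexStar, Set.disjoint_range_iff]
  simp [hj]

theorem exists_edgeDisjointFamily_pathFanExt (hl : 2 ≤ ℓ) {F : Fin 2 → G.Subgraph}
    (hF : EdgeDisjointFamily G (Set.range v) F) :
    ∃ F' : Fin ℓ → (pathFanExt G k ℓ v).Subgraph,
      EdgeDisjointFamily (pathFanExt G k ℓ v) (Set.range terminal) F' := by
  refine exists_edgeDisjointFamily (ι := Fin 2 ⊕ Fin (ℓ - 2)) (by simp [hl])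
    (Sum.elim (fun s ↦ prolongation ℓ v (F s) s) (apexStar G v)) ?_ ?_ ?_
  · rintro (s | j)
    · exact connected_prolongation (hF.1 s).connected (hF.1 s).1 s
    · exact connected_apexStar j
  · rintro (s | j)
    · exact Set.range_subset_iff.2 (terminal_mem_prolongation _ s)
    · exact Set.range_subset_iff.2 (terminal_mem_apexStar j)
  · rintro (s | j) (t | j') h
    · have hst : s ≠ t := fun hst ↦ h (congrArg _ hst)
      exact disjoint_edgeSet_prolongation (hF.disjoint_edgeSet hst) hst
    · exact disjoint_edgeSet_prolongation_apexStar _ s j'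
    · exact (disjoint_edgeSet_prolongation_apexStar _ t j).symm
    · exact disjoint_edgeSet_apexStar fun hj ↦ h (congrArg _ hj)

end OfSteinerTrees

section ToSteinerTrees

variable {H : (pathFanExt G k ℓ v).Subgraph}

theorem not_adj_apex_of_adj_mid (hH : H.Connected)
    (huniq : ∀ i, (H.neighborSet (terminal i)).Subsingleton) {i : Fin k} {s : Fin 2}
    (hmid : H.Adj (terminal i) (mid i s)) (j : Fin (ℓ - 2)) (w) : ¬ H.Adj (apex j) w := by
  intro hw
  have hleaf : ∀ m, H.Adj (terminal m) (apex j) → ∀ x, H.Adj (terminal m) x → x = apex j :=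
    fun m hm x hx ↦ huniq m hx hm
  have hi : ¬ H.Adj (terminal i) (apex j) := fun h ↦ by simpa using hleaf i h _ hmid
  obtain ⟨x, hx, y, hy, hxy⟩ := exists_adj_mem_notMem_of_connected hH
    (insert (apex j) {x | ∃ m, x = terminal m ∧ H.Adj x (apex j)}) hw.fst_mem (.inl rfl)
    hmid.fst_mem (by simpa using hi)
  rcases hx with rfl | ⟨m, rfl, hm⟩
  · obtain ⟨m, rfl⟩ := adj_apex_iff.1 hxy.adj_sub
    exact hy (.inr ⟨m, rfl, hxy.symm⟩)
  · exact hy (.inl (hleaf m hm y hxy))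

theorem inl_mem_verts (hH : H.Connected) (hapex : ∀ j w, ¬ H.Adj (apex j) w) {i i' : Fin k}
    (hi : terminal i ∈ H.verts) (hi' : terminal i' ∈ H.verts) (hne : i ≠ i') :
    .inl (v i) ∈ H.verts := by
  obtain ⟨x, hx, y, hy, hxy⟩ := exists_adj_mem_notMem_of_connected hH
    (insert (terminal i) (Set.range (mid i))) hi (.inl rfl) hi' (by simpa using hne.symm)
  rcases hx with rfl | ⟨s, rfl⟩
  · rcases adj_terminal_iff.1 hxy.adj_sub with ⟨s, rfl⟩ | ⟨j, rfl⟩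
    · exact (hy (.inr ⟨s, rfl⟩)).elim
    · exact (hapex j _ hxy.symm).elim
  · rcases adj_mid_iff.1 hxy.adj_sub with rfl | rfl
    · exact hxy.snd_mem
    · exact (hy (.inl rfl)).elim

/-- The map that contracts the paths between `vᵢ` and `vᵢ'` onto `vᵢ`; the apices, at which it is
not a contraction, are sent to an arbitrary vertex `p₀`. -/
def contraction (v : Fin k → V) (p₀ : V) : V ⊕ ((Fin k × Fin 3) ⊕ Fin (ℓ - 2)) → V
  | .inl p => p
  | .inr (.inl (i, _)) => v i
  | .inr (.inr _) => p₀

theorem contraction_eq_or_adj (p₀ : V) (hapex : ∀ j w, ¬ H.Adj (apex j) w) {x y}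
    (hxy : H.Adj x y) : contraction v p₀ x = contraction v p₀ y ∨
      (H.comap (inlHom G k ℓ v)).Adj (contraction v p₀ x) (contraction v p₀ y) := by
  have hadj := hxy.adj_sub
  cases x using vertex_cases with
  | inl p =>
    cases y using vertex_cases with
    | inl q => exact .inr ⟨adj_inl_inl.1 hadj, hxy⟩
    | terminal i => obtain ⟨_, h⟩ | ⟨_, h⟩ := adj_terminal_iff.1 hadj.symm <;> cases h
    | mid i s =>
      rcases adj_mid_iff.1 hadj.symm with h | h
      · exact .inl (Sum.inl_injective h)
      · cases h
    | apex j => exact (hapex j _ hxy.symm).elim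
  | terminal i =>
    rcases adj_terminal_iff.1 hadj with ⟨s, rfl⟩ | ⟨j, rfl⟩
    · exact .inl rfl
    · exact (hapex j _ hxy.symm).elim
  | mid i s => rcases adj_mid_iff.1 hadj with rfl | rfl <;> exact .inl rfl
  | apex j => exact (hapex j _ hxy).elim

theorem connected_comap_inlHom (hH : H.Connected) (hapex : ∀ j w, ¬ H.Adj (apex j) w)
    (hv : ∀ i, .inl (v i) ∈ H.verts) (i₀ : Fin k) :
    (H.comap (inlHom G k ℓ v)).Connected := by
  have hmaps : Set.MapsTo (contraction v (v i₀)) H.verts (H.comap (inlHom G k ℓ v)).verts := by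
    rintro (p | ⟨i, a⟩ | j) hx
    exacts [hx, hv i, hv i₀]
  refine ⟨connected_of_surjective_of_eq_or_adj hH.coe (f := hmaps.restrict) ?_ ?_⟩
  · exact fun p ↦ ⟨⟨.inl p, p.2⟩, rfl⟩
  · intro x y hxy
    exact (contraction_eq_or_adj (v i₀) hapex hxy).imp_left Subtype.ext

theorem exists_adj_terminal [Nontrivial (Fin k)] (hH : H.Connected)
    (hterm : Set.range terminal ⊆ H.verts) (i : Fin k) : ∃ w, H.Adj (terminal i) w := by
  obtain ⟨i', hne⟩ := exists_ne i
  have : Nontrivial H.verts :=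
    ⟨⟨terminal i, hterm ⟨i, rfl⟩⟩, ⟨terminal i', hterm ⟨i', rfl⟩⟩, by simpa using hne.symm⟩
  exact hH.preconnected.exists_adj_of_nontrivial ⟨terminal i, hterm ⟨i, rfl⟩⟩

theorem exists_edgeDisjointFamily_of_pathFanExt [Nontrivial (Fin k)] (hl : 2 ≤ ℓ)
    {F : Fin ℓ → (pathFanExt G k ℓ v).Subgraph}
    (hF : EdgeDisjointFamily (pathFanExt G k ℓ v) (Set.range terminal) F) :
    ∃ F' : Fin 2 → G.Subgraph, EdgeDisjointFamily G (Set.range v) F' := by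
  have hconn : ∀ t, (F t).Connected := fun t ↦ (hF.1 t).connected
  choose c hc using fun i ↦ hF.exists_equiv_neighborSet (encard_neighborSet_terminal hl i).le
    fun t ↦ exists_adj_terminal (hconn t) (hF.1 t).1 i
  have huniq : ∀ t i, ((F t).neighborSet (terminal i)).Subsingleton := fun t i x hx y hy ↦
    ((hc i t x).1 hx).trans ((hc i t y).1 hy).symm
  obtain ⟨i₀, -⟩ := exists_pair_ne (Fin k)
  let τ : Fin 2 → Fin ℓ := fun s ↦ (c i₀).symm ⟨mid i₀ s, (adj_mid_terminal i₀ s).symm⟩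
  have hτ : ∀ s, (F (τ s)).Adj (terminal i₀) (mid i₀ s) := fun s ↦ by simp [hc, τ]
  have hτ_inj : Function.Injective τ := fun s t hst ↦ by
    have hmid : mid i₀ s = mid i₀ t := congrArg Subtype.val ((c i₀).symm.injective hst)
    simpa using hmid
  have hapex : ∀ s j w, ¬ (F (τ s)).Adj (apex j) w := fun s ↦
    not_adj_apex_of_adj_mid (hconn _) (huniq _) (hτ s)
  have hv : ∀ s i, .inl (v i) ∈ (F (τ s)).verts := by
    intro s i
    obtain ⟨i', hne⟩ := exists_ne i
    exact inl_mem_verts (hconn _) (hapex s) ((hF.1 _).1 ⟨i, rfl⟩) ((hF.1 _).1 ⟨i', rfl⟩) hne.symm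
  exact exists_edgeDisjointFamily (Fintype.card_fin 2) (fun s ↦ (F (τ s)).comap (inlHom G k ℓ v))
    (fun s ↦ connected_comap_inlHom (hconn _) (hapex s) (hv s) i₀)
    (fun s ↦ Set.range_subset_iff.2 (hv s))
    fun s t hst ↦ disjoint_edgeSet_comap (hF.disjoint_edgeSet (hτ_inj.ne hst)) _

end ToSteinerTrees

end pathFanExt

open pathFanExt in
theorem stmt7_general {V : Type*} (G : SimpleGraph V) {k ℓ : ℕ} (hk : 0 < k) (hl : 2 ≤ ℓ)
    (v : Fin k → V) :
    (∃ F : Fin 2 → G.Subgraph, EdgeDisjointFamily G (Set.range v) F) ↔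
    (∃ F : Fin ℓ → (pathFanExt G k ℓ v).Subgraph,
        EdgeDisjointFamily (pathFanExt G k ℓ v) (Set.range terminal) F) := by
  refine ⟨fun ⟨_, hF⟩ ↦ exists_edgeDisjointFamily_pathFanExt hl hF, fun ⟨_, hF⟩ ↦ ?_⟩
  rcases subsingleton_or_nontrivial (Fin k) with _ | _
  · exact exists_edgeDisjointFamily_of_subset_singleton (x := v ⟨0, hk⟩)
      (Set.range_subset_iff.2 fun i ↦ congrArg v (Subsingleton.elim i _))
  · exact exists_edgeDisjointFamily_of_pathFanExt hl hF

/-- `G` contains two edge-disjoint Steiner trees connecting `S = {v₁, …, v_k}` iff `G'`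
contains `ℓ` pairwise edge-disjoint Steiner trees connecting `S' = {v₁', …, v_k'}`. -/
theorem stmt7 {V : Type*} (G : SimpleGraph V) (k ℓ : ℕ) (hk : 0 < k) (hl : 3 ≤ ℓ)
    (v : Fin k → V) (hv : Function.Injective v) :
    (∃ F : Fin 2 → G.Subgraph, EdgeDisjointFamily G (Set.range v) F) ↔
    (∃ F : Fin ℓ → (pathFanExt G k ℓ v).Subgraph,
        EdgeDisjointFamily (pathFanExt G k ℓ v)
          {x | ∃ i : Fin k, x = Sum.inr (Sum.inl (i, 0))} F) := by
  simpa only [Set.range, eq_comm] using stmt7_general G hk (by omega) v
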